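/- The spanning tree constant of the diamond lattice satisfies log 4 − (1/2) ∑_{n=1}^∞ (1/16)ⁿ·(1/n)·∑_{j=0}^n C(n,j)²·C(2j,j)·C(2n−2j,n−j) = (8/15)·log 2 + (4/5)·log 3 − (4/135)·₅F₄(5/3,3/2,4/3,1,1; 2,2,2,2; 1). -/

import Mathlib

/-!
Let `aₙ = 16⁻ⁿ ∑ⱼ C(n,j)² C(2j,j) C(2n-2j,n-j)` (rescaled Domb numbers) and
`gₖ = (1/3)ₖ(1/2)ₖ(2/3)ₖ / k!³`, so that `∑ gₖ₊₁/(k+1)` is `1/9` of the `₅F₄` value. The required sum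
`S = ∑ aₙ₊₁/(n+1)` is obtained from two evaluations,

* `∑ (2aₙ₊₁ + aₙ/4)/(n+1) = -3 log (3/4) + ∑ gₖ₊₁/(k+1)` (`hasSum_two_term₁`),
* `∑ (aₙ₊₁ + 2aₙ)/(n+1) = log 16` (`hasSum_two_term₂`),

because eight times the first minus the second is `15 S`.

Both come from cubic transformations of the Domb generating function. Creative telescoping shows
that two further hypergeometric sums satisfy the Domb recurrence, hence equal the Domb numbers
(`sum_f₀_eq_f₁`, `sum_f₀_eq_f₂`). In the two-term combinations above these sums collapse to
binomial coefficients which are the Taylor coefficients of powers of `x²/(1-x)³` and `x/(1-x)³`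
(`hasSum_cubic`). The first expansion is used at `x = 1/4`, where `(27/4) x²/(1-x)³ = 1`, and
everything is positive.

The second expansion is needed at `x = w = 1`, outside its region of convergence. For this `gₖ` is
written as the `k`-th moment of a probability measure `μ` on `(0, 1]`, the law of a product of three
independent variables of type `Beta(a, 1-a)`, `a = 1/3, 1/2, 2/3`. Then
`∑ (aₙ₊₁ + 2aₙ) wⁿ⁺¹/(n+1) = -3 log (1-w) - ∫ log (1 + (27/4) x w/(1-w)³) dμ(x)` near `w = 0`, hence
on `[0, 1)` by the identity theorem. As `w → 1⁻` the right side tends to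
`-log (27/4) - ∫ log x dμ(x)`, and `∫ log x dμ(x) = -log 108` follows from
`ψ(1/2) = -γ - 2 log 2` and `ψ(1/3) + ψ(2/3) = -2γ - 3 log 3`, the latter being the logarithmic
derivative of Gauss's multiplication formula (`Gamma_triple`). Abel's theorem then gives `log 16`.
-/

open Real Finset

/-- Pochhammer symbol `(a)ₙ = a(a+1)⋯(a+n−1) = Γ(a+n)/Γ(a)`. -/
noncomputable def poch (a : ℝ) (n : ℕ) : ℝ := ∏ i ∈ Finset.range n, (a + i)

/-- The generalized hypergeometric function `₅F₄(5/3,3/2,4/3,1,1; 2,2,2,2; z)`. -/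
noncomputable def F54 (z : ℝ) : ℝ :=
  ∑' n : ℕ, (poch (5/3) n * poch (3/2) n * poch (4/3) n * poch 1 n * poch 1 n) /
      (poch 2 n * poch 2 n * poch 2 n * poch 2 n) * z ^ n / (n.factorial : ℝ)

/-! ### Two further sums for the Domb numbers -/

/-- The reciprocal factorial `1 / m!`, extended by `0` to negative integers. -/
noncomputable def rfact (m : ℤ) : ℝ := if m < 0 then 0 else 1 / (m.toNat.factorial : ℝ)

lemma rfact_natCast (m : ℕ) : rfact m = 1 / (m.factorial : ℝ) := by
  simp [rfact]

lemma rfact_neg {m : ℤ} (h : m < 0) : rfact m = 0 := by simp [rfact, h]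

/-- The functional equation holds at every integer; this removes all boundary cases. -/
lemma rfact_succ (m : ℤ) : rfact m = (m + 1) * rfact (m + 1) := by
  rcases lt_trichotomy m (-1) with h | h | h
  · rw [rfact_neg (by omega), rfact_neg (by omega), mul_zero]
  · subst h; simp [rfact]
  · lift m to ℕ using (by omega)
    rw [rfact_natCast]
    have : ((m : ℤ) + 1) = ((m + 1 : ℕ) : ℤ) := by push_cast; rfl
    rw [this, rfact_natCast, Nat.factorial_succ]
    have := Nat.factorial_ne_zero m
    push_cast
    field_simp

/-- The central binomial coefficient, extended by `0` to negative integers. -/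
noncomputable def cbin (m : ℤ) : ℝ := if m < 0 then 0 else (m.toNat.centralBinom : ℝ)

lemma cbin_natCast (m : ℕ) : cbin m = (m.centralBinom : ℝ) := by
  simp [cbin]

lemma cbin_succ (m : ℤ) : 2 * (2 * m + 1) * cbin m = (m + 1) * cbin (m + 1) := by
  rcases lt_trichotomy m (-1) with h | h | h
  · simp [cbin, show m < 0 by omega, show m + 1 < 0 by omega]
  · subst h; simp [cbin]
  · lift m to ℕ using (by omega)
    have : ((m : ℤ) + 1) = ((m + 1 : ℕ) : ℤ) := by push_cast; rfl
    rw [this, cbin_natCast, cbin_natCast]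
    have := Nat.succ_mul_centralBinom_succ m
    push_cast
    exact_mod_cast this.symm

/-- The three-term recurrence of the Domb numbers. -/
def DombRec (u : ℕ → ℝ) : Prop := ∀ n : ℕ,
  ((n : ℝ) + 2) ^ 3 * u (n + 2) - 2 * (2 * n + 3) * (5 * n ^ 2 + 15 * n + 12) * u (n + 1)
    + 64 * ((n : ℝ) + 1) ^ 3 * u n = 0

lemma DombRec.ext {u v : ℕ → ℝ} (hu : DombRec u) (hv : DombRec v) (h0 : u 0 = v 0)
    (h1 : u 1 = v 1) (n : ℕ) : u n = v n := by
  induction n using Nat.twoStepInduction with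
  | zero => exact h0
  | one => exact h1
  | more n ih0 ih1 =>
    have h := hu n
    have h' := hv n
    rw [ih0, ih1] at h
    have hne : ((n : ℝ) + 2) ^ 3 ≠ 0 := by positivity
    exact mul_left_cancel₀ hne (by linarith)

/-- Creative telescoping: a certificate `G` for the Domb recurrence of the summand `f`. -/
lemma DombRec.of_certificate {f G : ℕ → ℕ → ℝ} (hf : ∀ n k, n < k → f n k = 0)
    (hG0 : ∀ n, G n 0 = 0) (hG : ∀ n, G n (n + 3) = 0)
    (h : ∀ n k : ℕ, ((n : ℝ) + 2) ^ 3 * f (n + 2) k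
      - 2 * (2 * n + 3) * (5 * n ^ 2 + 15 * n + 12) * f (n + 1) k
      + 64 * ((n : ℝ) + 1) ^ 3 * f n k = G n (k + 1) - G n k) :
    DombRec (fun n => ∑ k ∈ range (n + 1), f n k) := by
  intro n
  have e0 : ∑ k ∈ range (n + 1), f n k = ∑ k ∈ range (n + 3), f n k := by
    rw [sum_range_succ _ (n + 2), sum_range_succ _ (n + 1), hf n _ (by omega), hf n _ (by omega)]
    simp
  have e1 : ∑ k ∈ range (n + 1 + 1), f (n + 1) k = ∑ k ∈ range (n + 3), f (n + 1) k := by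
    rw [sum_range_succ _ (n + 2), hf (n + 1) _ (by omega)]
    simp
  simp only [e0, e1, show n + 2 + 1 = n + 3 by rfl]
  rw [mul_sum, mul_sum, mul_sum, ← sum_sub_distrib, ← sum_add_distrib]
  simp only [h]
  rw [sum_range_sub, hG0, hG, sub_zero]

/-- Summand of the Domb number `∑ C(n,k)² C(2k,k) C(2n-2k,n-k)`. -/
noncomputable def f₀ (n k : ℕ) : ℝ :=
  (n.factorial : ℝ) ^ 2 / (k.factorial : ℝ) ^ 2 * rfact (n - k) ^ 2 * cbin k * cbin (n - k)

/-- Summand of `∑ 4ⁿ 16⁻ᵏ (n+k)! (2k)! / (k!⁵ (n-2k)!)`, over `2k ≤ n`. -/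
noncomputable def f₁ (n k : ℕ) : ℝ :=
  4 ^ n / 16 ^ k * ((n + k).factorial * (2 * k).factorial / (k.factorial : ℝ) ^ 5)
    * rfact (n - 2 * k)

/-- Summand of `∑ (-1)ᵏ 16ⁿ⁻ᵏ (n+2k)! (2k)! / (k!⁵ (n-k)!)`, over `k ≤ n`. -/
noncomputable def f₂ (n k : ℕ) : ℝ :=
  (-1) ^ k * 16 ^ n / 16 ^ k * ((n + 2 * k).factorial * (2 * k).factorial / (k.factorial : ℝ) ^ 5)
    * rfact (n - k)

lemma dombRec_f₁ : DombRec (fun n => ∑ k ∈ range (n + 1), f₁ n k) := by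
  refine DombRec.of_certificate (G := fun n k => -192 * (3 * n + 4) * k ^ 4 *
    (4 ^ n / 16 ^ k * ((n + k).factorial * (2 * k).factorial / (k.factorial : ℝ) ^ 5)
    * rfact (n - 2 * k + 2))) ?_ ?_ ?_ ?_
  · intro n k h
    rw [f₁, rfact_neg (by omega), mul_zero]
  · intro n; simp
  · intro n
    rw [rfact_neg (by push_cast; omega)]; simp
  · intro n k
    simp only [f₁]
    have r0 : rfact ((n : ℤ) - 2 * k) = (n - 2 * k + 1) * ((n - 2 * k + 2) *
        rfact (n - 2 * k + 2)) := by
      rw [rfact_succ, rfact_succ ((n : ℤ) - 2 * k + 1)]; push_cast; ring_nf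
    have r1 : rfact (((n + 1 : ℕ) : ℤ) - 2 * k) = (n - 2 * k + 2) * rfact (n - 2 * k + 2) := by
      rw [rfact_succ]; push_cast; ring_nf
    have r2 : rfact (((n + 2 : ℕ) : ℤ) - 2 * k) = rfact (n - 2 * k + 2) := by
      push_cast; ring_nf
    have r3 : rfact ((n : ℤ) - 2 * (k + 1 : ℕ) + 2) = (n - 2 * k + 1) * ((n - 2 * k + 2) *
        rfact (n - 2 * k + 2)) := by
      rw [← r0]; push_cast; ring_nf
    rw [r0, r1, r2, r3]
    have hk := Nat.factorial_ne_zero k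
    rw [show n + 1 + k = n + k + 1 by ring, show n + 2 + k = n + k + 1 + 1 by ring,
      show n + (k + 1) = n + k + 1 by ring, show 2 * (k + 1) = 2 * k + 1 + 1 by ring]
    simp only [Nat.factorial_succ, pow_succ (4 : ℝ), pow_succ (16 : ℝ)]
    push_cast
    field_simp
    ring

lemma dombRec_f₂ : DombRec (fun n => ∑ k ∈ range (n + 1), f₂ n k) := by
  refine DombRec.of_certificate (G := fun n k => -768 * (3 * n + 5) * k ^ 4 *
    ((-1) ^ k * 16 ^ n / 16 ^ k *
      ((n + 2 * k).factorial * (2 * k).factorial / (k.factorial : ℝ) ^ 5)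
    * rfact (n - k + 2))) ?_ ?_ ?_ ?_
  · intro n k h
    rw [f₂, rfact_neg (by omega), mul_zero]
  · intro n; simp
  · intro n
    rw [rfact_neg (by push_cast; omega)]; simp
  · intro n k
    simp only [f₂]
    have r0 : rfact ((n : ℤ) - k) = (n - k + 1) * ((n - k + 2) * rfact (n - k + 2)) := by
      rw [rfact_succ, rfact_succ ((n : ℤ) - k + 1)]; push_cast; ring_nf
    have r1 : rfact (((n + 1 : ℕ) : ℤ) - k) = (n - k + 2) * rfact (n - k + 2) := by
      rw [rfact_succ]; push_cast; ring_nf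
    have r2 : rfact (((n + 2 : ℕ) : ℤ) - k) = rfact (n - k + 2) := by
      push_cast; ring_nf
    have r3 : rfact ((n : ℤ) - (k + 1 : ℕ) + 2) = (n - k + 2) * rfact (n - k + 2) := by
      rw [← r1]; push_cast; ring_nf
    rw [r0, r1, r2, r3]
    have hk := Nat.factorial_ne_zero k
    rw [show n + 1 + 2 * k = n + 2 * k + 1 by ring, show n + 2 + 2 * k = n + 2 * k + 1 + 1 by ring,
      show n + 2 * (k + 1) = n + 2 * k + 1 + 1 by ring, show 2 * (k + 1) = 2 * k + 1 + 1 by ring]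
    simp only [Nat.factorial_succ, pow_succ (16 : ℝ), pow_succ (-1 : ℝ)]
    push_cast
    field_simp
    ring

lemma odd_cast_ne_zero (m : ℤ) : (2 * (m : ℝ) + 1) ≠ 0 := by
  have : (2 * m + 1) ≠ 0 := by omega
  exact_mod_cast this

lemma dombRec_f₀ : DombRec (fun n => ∑ k ∈ range (n + 1), f₀ n k) := by
  refine DombRec.of_certificate (G := fun n k =>
    (16 * (n + 1) ^ 2 * k ^ 3 - 24 * (n + 1) ^ 2 * (3 * n + 5) * k ^ 2
      + 4 * (n + 1) ^ 2 * (26 * n ^ 2 + 89 * n + 74) * k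
      - 8 * (n + 1) ^ 2 * (6 * n ^ 3 + 31 * n ^ 2 + 52 * n + 28)) * k ^ 3 *
    ((n.factorial : ℝ) ^ 2 / (k.factorial : ℝ) ^ 2 * rfact (n - k + 2) ^ 2 * cbin k *
      (cbin (n - k + 2) / (4 * (2 * (n - k) + 3))))) ?_ ?_ ?_ ?_
  · intro n k h
    rw [f₀, rfact_neg (by omega)]; simp
  · intro n; simp
  · intro n
    rw [rfact_neg (by push_cast; omega)]; simp
  · intro n k
    simp only [f₀]
    have r0 : rfact ((n : ℤ) - k) = (n - k + 1) * ((n - k + 2) * rfact (n - k + 2)) := by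
      rw [rfact_succ, rfact_succ ((n : ℤ) - k + 1)]; push_cast; ring_nf
    have r1 : rfact (((n + 1 : ℕ) : ℤ) - k) = (n - k + 2) * rfact (n - k + 2) := by
      rw [rfact_succ]; push_cast; ring_nf
    have r2 : rfact (((n + 2 : ℕ) : ℤ) - k) = rfact (n - k + 2) := by
      push_cast; ring_nf
    have r3 : rfact ((n : ℤ) - (k + 1 : ℕ) + 2) = (n - k + 2) * rfact (n - k + 2) := by
      rw [← r1]; push_cast; ring_nf
    have o1 := odd_cast_ne_zero ((n : ℤ) - k)
    have o3 := odd_cast_ne_zero ((n : ℤ) - k + 1)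
    have c1 : cbin (((n + 1 : ℕ) : ℤ) - k) = (n - k + 2) * cbin (n - k + 2) /
        (2 * (2 * (n - k + 1) + 1)) := by
      have := cbin_succ ((n : ℤ) - k + 1)
      push_cast at this o3 ⊢
      rw [eq_div_iff (by simpa using o3)]
      ring_nf at this ⊢
      linarith
    have c0 : cbin ((n : ℤ) - k) = (n - k + 1) * cbin (((n + 1 : ℕ) : ℤ) - k) /
        (2 * (2 * (n - k) + 1)) := by
      have := cbin_succ ((n : ℤ) - k)
      push_cast at this o1 ⊢
      rw [eq_div_iff (by simpa using o1)]
      ring_nf at this ⊢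
      linarith
    have c2 : cbin (((n + 2 : ℕ) : ℤ) - k) = cbin (n - k + 2) := by
      push_cast; ring_nf
    have c3 : cbin ((n : ℤ) - (k + 1 : ℕ) + 2) = cbin (((n + 1 : ℕ) : ℤ) - k) := by
      push_cast; ring_nf
    have c4 : cbin ((k + 1 : ℕ) : ℤ) = 2 * (2 * k + 1) * cbin k / (k + 1) := by
      have := cbin_succ (k : ℤ)
      rw [eq_div_iff (by positivity)]
      push_cast at this ⊢
      linarith
    rw [r0, r1, r2, r3, c0, c2, c3, c1, c4]
    have hk := Nat.factorial_ne_zero k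
    simp only [Nat.factorial_succ]
    push_cast at o1 o3 ⊢
    have o3' : 2 * ((n : ℝ) - k) + 3 ≠ 0 := by convert o3 using 1; ring
    have o4 : 2 * ((n : ℝ) - (k + 1)) + 3 ≠ 0 := by convert o1 using 1; ring
    have e4 : 2 * ((n : ℝ) - (k + 1)) + 3 = 2 * ((n : ℝ) - k) + 1 := by ring
    have e3 : 2 * ((n : ℝ) - k + 1) + 1 = 2 * ((n : ℝ) - k) + 3 := by ring
    rw [e4, e3]
    field_simp
    ring

lemma sum_f₀_eq_f₁ (n : ℕ) : ∑ k ∈ range (n + 1), f₀ n k = ∑ k ∈ range (n + 1), f₁ n k := by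
  refine dombRec_f₀.ext dombRec_f₁ ?_ ?_ n <;>
  norm_num [sum_range_succ, f₀, f₁, rfact, cbin, Nat.centralBinom, Nat.choose, Nat.factorial]

lemma sum_f₀_eq_f₂ (n : ℕ) : ∑ k ∈ range (n + 1), f₀ n k = ∑ k ∈ range (n + 1), f₂ n k := by
  refine dombRec_f₀.ext dombRec_f₂ ?_ ?_ n <;>
  norm_num [sum_range_succ, f₀, f₂, rfact, cbin, Nat.centralBinom, Nat.choose, Nat.factorial]

/-! ### Cubic expansions of the two-term combinations -/

/-- The coefficients `(1/3)ₖ(1/2)ₖ(2/3)ₖ / k!³ = (2k)!(3k)! / (k!⁵ 108ᵏ)` of the `₃F₂` series behind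
the `₅F₄`. -/
noncomputable def gcoef (k : ℕ) : ℝ :=
  poch (1 / 3) k * poch (1 / 2) k * poch (2 / 3) k / (k.factorial : ℝ) ^ 3

lemma poch_succ (a : ℝ) (n : ℕ) : poch a (n + 1) = poch a n * (a + n) := by
  simp [poch, prod_range_succ]

lemma poch_pos {a : ℝ} (ha : 0 < a) (n : ℕ) : 0 < poch a n :=
  prod_pos fun i _ => by positivity

lemma gcoef_succ (k : ℕ) : gcoef (k + 1) =
    gcoef k * ((1 / 3 + k) * (1 / 2 + k) * (2 / 3 + k) / (k + 1) ^ 3) := by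
  simp only [gcoef, poch_succ, Nat.factorial_succ]
  push_cast
  field_simp

lemma gcoef_eq (k : ℕ) : gcoef k =
    (2 * k).factorial * (3 * k).factorial / (k.factorial : ℝ) ^ 5 / 108 ^ k := by
  induction k with
  | zero => simp [gcoef, poch]
  | succ k ih =>
    rw [gcoef_succ, ih, show 2 * (k + 1) = 2 * k + 1 + 1 by ring,
      show 3 * (k + 1) = 3 * k + 1 + 1 + 1 by ring]
    simp only [Nat.factorial_succ, pow_succ (108 : ℝ)]
    have hk := Nat.factorial_ne_zero k
    push_cast
    field_simp
    ring

lemma gcoef_pos (k : ℕ) : 0 < gcoef k := by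
  have := poch_pos (a := 1 / 3) (by norm_num) k
  have := poch_pos (a := 1 / 2) (by norm_num) k
  have := poch_pos (a := 2 / 3) (by norm_num) k
  unfold gcoef
  positivity

lemma gcoef_le (k : ℕ) : gcoef k ≤ 1 / (k + 1) := by
  induction k with
  | zero => simp [gcoef, poch]
  | succ k ih =>
    rw [gcoef_succ]
    refine (mul_le_mul_of_nonneg_right ih (by positivity)).trans ?_
    push_cast
    rw [div_mul_div_comm, div_le_div_iff₀ (by positivity) (by positivity)]
    have : (0 : ℝ) ≤ k := by positivity
    nlinarith [pow_pos (by positivity : (0 : ℝ) < k + 1) 3, mul_nonneg this this,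
      mul_nonneg this (mul_nonneg this this), mul_nonneg (mul_nonneg this this) (mul_nonneg this this)]

/-- `16⁻ⁿ` times the `n`-th Domb number. -/
noncomputable def adomb (n : ℕ) : ℝ := (1 / 16) ^ n * ∑ k ∈ range (n + 1), f₀ n k

lemma choose_eq_rfact (a b : ℕ) :
    (a.choose b : ℝ) = a.factorial / b.factorial * rfact ((a : ℤ) - b) := by
  rcases lt_or_ge a b with h | h
  · rw [Nat.choose_eq_zero_of_lt h, rfact_neg (by omega)]; simp
  · rw [← Nat.cast_sub h, rfact_natCast, Nat.cast_choose ℝ h]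
    field_simp

lemma f₀_eq {n k : ℕ} (h : k ≤ n) : f₀ n k =
    (n.choose k : ℝ) ^ 2 * ((2 * k).choose k : ℝ) * ((2 * n - 2 * k).choose (n - k) : ℝ) := by
  rw [f₀, choose_eq_rfact, cbin_natCast, ← Nat.cast_sub h, cbin_natCast, Nat.centralBinom,
    Nat.centralBinom, show 2 * n - 2 * k = 2 * (n - k) by omega]
  ring

lemma adomb_nonneg (n : ℕ) : 0 ≤ adomb n := by
  refine mul_nonneg (by positivity) (sum_nonneg fun k hk => ?_)
  rw [f₀_eq (Nat.lt_succ_iff.mp (mem_range.mp hk))]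
  positivity

/-- Coefficients of `H(t) = ∑ gₖ tᵏ / k`, rescaled by `(27/4)ᵏ` and shifted to start at `k = 1`. -/
noncomputable def ecoef (k : ℕ) : ℝ := (27 / 4) ^ (k + 1) * gcoef (k + 1) / (k + 1)

lemma ecoef_eq (k : ℕ) : ecoef k = (2 * k + 2).factorial * (3 * k + 3).factorial /
    ((k + 1).factorial : ℝ) ^ 5 / 16 ^ (k + 1) / (k + 1) := by
  rw [ecoef, gcoef_eq, show (108 : ℝ) = 27 / 4 * 16 by norm_num, mul_pow]
  field_simp
  ring_nf

lemma two_term_f₁ (n k : ℕ) :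
    2 * f₁ (n + 1) (k + 1) + 4 * f₁ n (k + 1) =
      (n + 1) * (4 ^ (n + 1) * (ecoef k * ((n + 1 + k).choose (3 * k + 2) : ℝ))) := by
  rw [f₁, f₁, ecoef_eq, choose_eq_rfact]
  have r : rfact ((n : ℤ) - 2 * (k + 1 : ℕ)) = (n - 2 * k - 1) *
      rfact (((n + 1 : ℕ) : ℤ) - 2 * (k + 1 : ℕ)) := by
    rw [rfact_succ]; push_cast; ring_nf
  have r' : rfact (((n + 1 + k : ℕ) : ℤ) - (3 * k + 2 : ℕ)) =
      rfact (((n + 1 : ℕ) : ℤ) - 2 * (k + 1 : ℕ)) := by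
    congr 1; push_cast; ring
  rw [r, r', show n + 1 + (k + 1) = n + k + 1 + 1 by ring, show n + (k + 1) = n + k + 1 by ring,
    show n + 1 + k = n + k + 1 by ring, show 2 * (k + 1) = 2 * k + 2 by ring,
    show 3 * k + 3 = 3 * k + 2 + 1 by ring, Nat.factorial_succ (n + k + 1),
    Nat.factorial_succ (3 * k + 2), pow_succ]
  push_cast
  field_simp
  ring

lemma two_term_f₂ (n k : ℕ) :
    f₂ (n + 1) (k + 1) + 32 * f₂ n (k + 1) =
      (n + 1) * (16 ^ (n + 1) *
        ((-1) ^ (k + 1) * ecoef k * ((n + 1 + 2 * k + 1).choose (3 * k + 2) : ℝ))) := by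
  rw [f₂, f₂, ecoef_eq, choose_eq_rfact]
  have r : rfact ((n : ℤ) - (k + 1 : ℕ)) = (n - k) *
      rfact (((n + 1 : ℕ) : ℤ) - (k + 1 : ℕ)) := by
    rw [rfact_succ]; push_cast; ring_nf
  have r' : rfact (((n + 1 + 2 * k + 1 : ℕ) : ℤ) - (3 * k + 2 : ℕ)) =
      rfact (((n + 1 : ℕ) : ℤ) - (k + 1 : ℕ)) := by
    congr 1; push_cast; ring
  rw [r, r', show n + 1 + 2 * (k + 1) = n + 2 * k + 2 + 1 by ring,
    show n + 2 * (k + 1) = n + 2 * k + 2 by ring,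
    show n + 1 + 2 * k + 1 = n + 2 * k + 2 by ring, show 2 * (k + 1) = 2 * k + 2 by ring,
    show 3 * k + 3 = 3 * k + 2 + 1 by ring, Nat.factorial_succ (n + 2 * k + 2),
    Nat.factorial_succ (3 * k + 2), pow_succ (16 : ℝ) n]
  push_cast
  field_simp
  ring

lemma adomb_two_term₁ (n : ℕ) :
    (2 * adomb (n + 1) + adomb n / 4) / (n + 1) = 3 * (1 / 4) ^ (n + 1) / (n + 1) +
      (1 / 4) ^ (n + 1) * ∑ k ∈ range (n + 1),
        ecoef k * ((n + 1 + k).choose (3 * k + 2) : ℝ) := by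
  have h0 : ∀ m, f₁ m 0 = 4 ^ m := fun m => by
    simp [f₁, rfact, Nat.factorial_ne_zero]
  have hz : f₁ n (n + 1) = 0 := by rw [f₁, rfact_neg (by push_cast; omega), mul_zero]
  have h2 : ∑ k ∈ range (n + 1), f₁ n k = 4 ^ n + ∑ k ∈ range (n + 1), f₁ n (k + 1) := by
    have := sum_range_succ (fun k => f₁ n k) (n + 1)
    rw [hz, add_zero, sum_range_succ'] at this
    rw [← this, h0]; ring
  have hs : 2 * ∑ k ∈ range (n + 1), f₁ (n + 1) (k + 1) + 4 * ∑ k ∈ range (n + 1), f₁ n (k + 1) =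
      (n + 1) * (4 ^ (n + 1) * ∑ k ∈ range (n + 1),
        ecoef k * ((n + 1 + k).choose (3 * k + 2) : ℝ)) := by
    rw [mul_sum, mul_sum, ← sum_add_distrib, mul_sum, mul_sum]
    exact sum_congr rfl fun k _ => two_term_f₁ n k
  rw [adomb, adomb, sum_f₀_eq_f₁, sum_f₀_eq_f₁, sum_range_succ', h0, h2]
  set S := ∑ k ∈ range (n + 1), ecoef k * ((n + 1 + k).choose (3 * k + 2) : ℝ)
  have hq : (1 / 16 : ℝ) ^ (n + 1) = (1 / 4) ^ (n + 1) * (1 / 4) ^ (n + 1) := by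
    rw [← mul_pow]; norm_num
  have hq' : (1 / 16 : ℝ) ^ n = 16 * (1 / 16) ^ (n + 1) := by rw [pow_succ]; ring
  have hq4 : (1 / 4 : ℝ) ^ (n + 1) * 4 ^ (n + 1) = 1 := by rw [← mul_pow]; norm_num
  have h4 : (4 : ℝ) ^ (n + 1) = 4 * 4 ^ n := by ring
  rw [hq', hq, div_eq_iff (by positivity), add_mul, div_mul_cancel₀ _ (by positivity)]
  generalize (1 / 4 : ℝ) ^ (n + 1) = q at *
  have : q * (q * (2 * ∑ k ∈ range (n + 1), f₁ (n + 1) (k + 1) +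
      4 * ∑ k ∈ range (n + 1), f₁ n (k + 1))) = q * S * (n + 1) := by
    rw [hs]; linear_combination (q * S * (n + 1)) * hq4
  linear_combination this + 3 * q * hq4 + q * q * h4 * (-1)

lemma adomb_two_term₂ (n : ℕ) :
    (adomb (n + 1) + 2 * adomb n) / (n + 1) = 3 / (n + 1) +
      ∑ k ∈ range (n + 1),
        (-1) ^ (k + 1) * ecoef k * ((n + 1 + 2 * k + 1).choose (3 * k + 2) : ℝ) := by
  have h0 : ∀ m, f₂ m 0 = 16 ^ m := fun m => by
    simp [f₂, rfact, Nat.factorial_ne_zero]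
  have hz : f₂ n (n + 1) = 0 := by rw [f₂, rfact_neg (by push_cast; omega), mul_zero]
  have h2 : ∑ k ∈ range (n + 1), f₂ n k = 16 ^ n + ∑ k ∈ range (n + 1), f₂ n (k + 1) := by
    have := sum_range_succ (fun k => f₂ n k) (n + 1)
    rw [hz, add_zero, sum_range_succ'] at this
    rw [← this, h0]; ring
  have hs : ∑ k ∈ range (n + 1), f₂ (n + 1) (k + 1) + 32 * ∑ k ∈ range (n + 1), f₂ n (k + 1) =
      (n + 1) * (16 ^ (n + 1) * ∑ k ∈ range (n + 1),
        (-1) ^ (k + 1) * ecoef k * ((n + 1 + 2 * k + 1).choose (3 * k + 2) : ℝ)) := by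
    rw [mul_sum, ← sum_add_distrib, mul_sum, mul_sum]
    exact sum_congr rfl fun k _ => two_term_f₂ n k
  rw [adomb, adomb, sum_f₀_eq_f₂, sum_f₀_eq_f₂, sum_range_succ', h0, h2]
  set S := ∑ k ∈ range (n + 1),
    (-1) ^ (k + 1) * ecoef k * ((n + 1 + 2 * k + 1).choose (3 * k + 2) : ℝ)
  have hq' : (1 / 16 : ℝ) ^ n = 16 * (1 / 16) ^ (n + 1) := by rw [pow_succ]; ring
  have hq4 : (1 / 16 : ℝ) ^ (n + 1) * 16 ^ (n + 1) = 1 := by rw [← mul_pow]; norm_num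
  have h4 : (16 : ℝ) ^ (n + 1) = 16 * 16 ^ n := by ring
  rw [hq', div_eq_iff (by positivity), add_mul, div_mul_cancel₀ _ (by positivity)]
  generalize (1 / 16 : ℝ) ^ (n + 1) = q at *
  linear_combination q * hs + (S * (n + 1) + 3) * hq4 - 2 * q * h4

/-- Expansion of `∑ₖ eₖ (xᵖ / (1-x)³)ᵏ⁺¹` in powers of `x`. The exponents `p = 2, r = 0` and
`p = 1, r = 1` are those of the two cubic transformations. -/
lemma hasSum_cubic {p r : ℕ} (hpr : p + r = 2) (hp : 1 ≤ p) {x : ℝ} (hx0 : 0 ≤ x) (hx1 : x < 1)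
    (e : ℕ → ℝ) (he : Summable fun k => |e k| * (x ^ p / (1 - x) ^ 3) ^ (k + 1)) :
    HasSum (fun n => x ^ n * ∑ k ∈ range n, e k * ((n + (r + 1) * k + r).choose (3 * k + 2) : ℝ))
      (∑' k, e k * (x ^ p / (1 - x) ^ 3) ^ (k + 1)) := by
  have key : ∀ k, HasSum (fun n => x ^ n * ((n + (r + 1) * k + r).choose (3 * k + 2) : ℝ))
      ((x ^ p / (1 - x) ^ 3) ^ (k + 1)) := by
    intro k
    have h := hasSum_choose_mul_geometric_of_norm_lt_one (3 * k + 2) (r := x)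
      (by rw [Real.norm_eq_abs, abs_of_nonneg hx0]; exact hx1)
    have h' := h.mul_left (x ^ (p * (k + 1)))
    have hinj : Function.Injective (fun m : ℕ => m + p * (k + 1)) := fun a b h => by simpa using h
    have hval : x ^ (p * (k + 1)) * (1 / (1 - x) ^ (3 * k + 2 + 1)) =
        (x ^ p / (1 - x) ^ 3) ^ (k + 1) := by
      rw [div_pow, ← pow_mul, ← pow_mul, show 3 * k + 2 + 1 = 3 * (k + 1) by ring]; ring
    rw [hval] at h'
    rw [← hinj.hasSum_iff]
    · convert! h' using 2 with m
      simp only [Function.comp_apply]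
      have : m + p * (k + 1) + (r + 1) * k + r = m + (3 * k + 2) := by
        have : p = 2 - r := by omega
        obtain rfl | rfl : r = 0 ∨ r = 1 := by omega
        · subst this; ring
        · subst this; ring
      rw [this, pow_add]; ring
    · intro n hn
      have hlt : n < p * (k + 1) := by
        by_contra hcon
        exact hn ⟨n - p * (k + 1), by simp; omega⟩
      rw [Nat.choose_eq_zero_of_lt]
      · simp
      · obtain rfl | rfl : r = 0 ∨ r = 1 := by omega
        · obtain rfl : p = 2 := by omega
          omega
        · obtain rfl : p = 1 := by omega
          omega
  set F : ℕ × ℕ → ℝ := fun q => e q.1 * (x ^ q.2 * ((q.2 + (r + 1) * q.1 + r).choose (3 * q.1 + 2) : ℝ))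
    with hF
  have hnorm : ∀ k n, ‖F (k, n)‖ = |e k| * (x ^ n * ((n + (r + 1) * k + r).choose (3 * k + 2) : ℝ)) := by
    intro k n
    rw [hF, norm_mul, Real.norm_eq_abs, Real.norm_eq_abs, abs_of_nonneg (a := x ^ n * _)]
    positivity
  have hsum : Summable F := by
    refine Summable.of_norm ?_
    rw [summable_prod_of_nonneg (fun _ => norm_nonneg _)]
    refine ⟨fun k => ?_, ?_⟩
    · simp only [hnorm]
      exact ((key k).mul_left _).summable
    · simp only [hnorm]
      refine he.congr fun k => ?_
      exact (((key k).mul_left _).tsum_eq).symm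
  have h1 : HasSum F (∑' k, e k * (x ^ p / (1 - x) ^ 3) ^ (k + 1)) := by
    have h2 := hsum.hasSum.prod_fiberwise (fun k => (key k).mul_left (e k))
    rw [h2.tsum_eq]
    exact hsum.hasSum
  have h2 : HasSum (F ∘ Prod.swap) (∑' k, e k * (x ^ p / (1 - x) ^ 3) ^ (k + 1)) :=
    (Equiv.prodComm ℕ ℕ).hasSum_iff.mpr h1
  refine h2.prod_fiberwise fun n => ?_
  have : x ^ n * ∑ k ∈ range n, e k * ((n + (r + 1) * k + r).choose (3 * k + 2) : ℝ) =
      ∑ k ∈ range n, (F ∘ Prod.swap) (n, k) := by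
    rw [mul_sum]
    refine sum_congr rfl fun k _ => ?_
    simp only [hF, Function.comp_apply, Prod.swap]
    ring
  rw [this]
  refine hasSum_sum_of_ne_finset_zero fun k hk => ?_
  simp only [hF, Function.comp_apply, Prod.swap]
  rw [Nat.choose_eq_zero_of_lt]
  · simp
  · simp only [mem_range, not_lt] at hk
    obtain rfl | rfl : r = 0 ∨ r = 1 := by omega
    · omega
    · omega

lemma summable_gcoef_div : Summable fun k : ℕ => gcoef (k + 1) / ((k : ℝ) + 1) := by
  have h : Summable fun k : ℕ => 1 / (((k + 1 : ℕ) : ℝ)) ^ 2 :=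
    (summable_nat_add_iff 1).mpr (Real.summable_one_div_nat_pow.mpr (by norm_num : 1 < 2))
  refine Summable.of_nonneg_of_le (fun k => ?_) (fun k => ?_) h
  · have := gcoef_pos (k + 1); positivity
  · have := gcoef_le (k + 1)
    push_cast at this ⊢
    calc gcoef (k + 1) / ((k : ℝ) + 1) ≤ 1 / ((k : ℝ) + 1) / (k + 1) := by
          gcongr
          refine this.trans ?_
          gcongr
          linarith
      _ = 1 / ((k : ℝ) + 1) ^ 2 := by field_simp

/-- The first transformation at `z = 1/16`, where its argument is exactly `1`. -/
lemma hasSum_two_term₁ :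
    HasSum (fun n : ℕ => (2 * adomb (n + 1) + adomb n / 4) / ((n : ℝ) + 1))
      (-3 * log (3 / 4) + ∑' k : ℕ, gcoef (k + 1) / ((k : ℝ) + 1)) := by
  have hterm : ∀ k, ecoef k * (((1 / 4 : ℝ)) ^ 2 / (1 - 1 / 4) ^ 3) ^ (k + 1) =
      gcoef (k + 1) / ((k : ℝ) + 1) := by
    intro k
    rw [ecoef, show ((1 / 4 : ℝ)) ^ 2 / (1 - 1 / 4) ^ 3 = (27 / 4)⁻¹ by norm_num, inv_pow]
    field_simp
  have hpos : ∀ k, 0 ≤ ecoef k := fun k => by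
    have := gcoef_pos (k + 1); unfold ecoef; positivity
  have h := hasSum_cubic (p := 2) (r := 0) rfl (by norm_num) (x := 1 / 4) (by norm_num)
    (by norm_num) ecoef (by simpa only [abs_of_nonneg (hpos _), hterm] using summable_gcoef_div)
  simp only [hterm] at h
  rw [← hasSum_nat_add_iff' 1] at h
  have hlog := (Real.hasSum_pow_div_log_of_abs_lt_one (x := 1 / 4)
    (by rw [abs_of_pos] <;> norm_num)).mul_left 3
  have hval : -3 * log (3 / 4) + ∑' k : ℕ, gcoef (k + 1) / ((k : ℝ) + 1) =
      3 * -log (1 - 1 / 4) + (∑' k : ℕ, gcoef (k + 1) / ((k : ℝ) + 1) -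
        ∑ i ∈ range 1, (1 / 4 : ℝ) ^ i *
          ∑ k ∈ range i, ecoef k * ((i + (0 + 1) * k + 0).choose (3 * k + 2) : ℝ)) := by
    norm_num
  rw [hval]
  convert! hlog.add h using 2 with n
  rw [adomb_two_term₁]
  simp [mul_div_assoc]

/-! ### Beta variables and their moments -/

open MeasureTheory ProbabilityTheory Filter Topology Set in
/-- Fractional moments of the `Beta(a, 1-a)` distribution, as lower Lebesgue integrals. -/
lemma lintegral_rpow_beta {a s : ℝ} (ha : 0 < a) (ha1 : a < 1) (hs : 0 < a + s) :
    ∫⁻ x, ENNReal.ofReal (x ^ s) ∂(betaMeasure a (1 - a)) =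
      ENNReal.ofReal (Gamma (a + s) / (Gamma a * Gamma (1 + s))) := by
  have hb := beta_pos ha (sub_pos.mpr ha1)
  have hb' := beta_pos hs (sub_pos.mpr ha1)
  have hconst : Gamma (a + s) / (Gamma a * Gamma (1 + s)) =
      beta (a + s) (1 - a) / beta a (1 - a) := by
    have h1 := (Gamma_pos_of_pos ha).ne'
    have h2 := (Gamma_pos_of_pos (sub_pos.mpr ha1)).ne'
    have h3 : Gamma (1 + s) ≠ 0 := (Gamma_pos_of_pos (by linarith)).ne'
    rw [beta, beta, show a + s + (1 - a) = 1 + s by ring, show a + (1 - a) = 1 by ring, Gamma_one]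
    field_simp
  have hm : Measurable (betaPDF a (1 - a)) := (measurable_betaPDFReal _ _).ennreal_ofReal
  rw [betaMeasure, lintegral_withDensity_eq_lintegral_mul _ hm (by fun_prop), hconst]
  have : ∀ x : ℝ, (betaPDF a (1 - a) * fun x => ENNReal.ofReal (x ^ s)) x =
      ENNReal.ofReal (beta (a + s) (1 - a) / beta a (1 - a)) * betaPDF (a + s) (1 - a) x := by
    intro x
    rw [Pi.mul_apply, betaPDF, betaPDF, mul_comm, ← ENNReal.ofReal_mul', ← ENNReal.ofReal_mul (by positivity)]
    · congr 1
      unfold betaPDFReal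
      split_ifs with h
      · rw [show a + s - 1 = s + (a - 1) by ring, rpow_add h.1]
        field_simp
      · simp
    · unfold betaPDFReal
      split_ifs with h
      · exact mul_nonneg (mul_nonneg (by positivity) (rpow_nonneg h.1.le _))
          (rpow_nonneg (by linarith [h.2]) _)
      · exact le_rfl
  simp_rw [this]
  have hm' : Measurable (betaPDF (a + s) (1 - a)) := (measurable_betaPDFReal _ _).ennreal_ofReal
  rw [lintegral_const_mul _ hm',
    lintegral_betaPDF_eq_one hs (sub_pos.mpr ha1), mul_one]

open MeasureTheory ProbabilityTheory Filter Topology Set in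
lemma ae_beta (a : ℝ) : ∀ᵐ x ∂(betaMeasure a (1 - a)), 0 < x ∧ x ≤ 1 := by
  have hm : Measurable (betaPDF a (1 - a)) := (measurable_betaPDFReal _ _).ennreal_ofReal
  rw [betaMeasure, ae_withDensity_iff hm]
  refine Eventually.of_forall fun x hx => ?_
  by_contra h
  apply hx
  rw [betaPDF, betaPDFReal, if_neg (fun h' => h ⟨h'.1, h'.2.le⟩), ENNReal.ofReal_zero]

open MeasureTheory ProbabilityTheory Filter Topology Set in
lemma integral_rpow_beta {a s : ℝ} (ha : 0 < a) (ha1 : a < 1) (hs : 0 < a + s) :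
    Integrable (fun x : ℝ => x ^ s) (betaMeasure a (1 - a)) ∧
    ∫ x, x ^ s ∂(betaMeasure a (1 - a)) = Gamma (a + s) / (Gamma a * Gamma (1 + s)) := by
  have hnn : 0 ≤ᵐ[betaMeasure a (1 - a)] fun x : ℝ => x ^ s := by
    filter_upwards [ae_beta a] with x hx using rpow_nonneg hx.1.le _
  have hmeas : AEStronglyMeasurable (fun x : ℝ => x ^ s) (betaMeasure a (1 - a)) :=
    Measurable.aestronglyMeasurable (by fun_prop)
  refine ⟨⟨hmeas, ?_⟩, ?_⟩
  · rw [hasFiniteIntegral_iff_ofReal hnn, lintegral_rpow_beta ha ha1 hs]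
    exact ENNReal.ofReal_lt_top
  · rw [integral_eq_lintegral_of_nonneg_ae hnn hmeas, lintegral_rpow_beta ha ha1 hs,
      ENNReal.toReal_ofReal]
    have h1 := Gamma_pos_of_pos ha
    have h2 := Gamma_pos_of_pos hs
    have h3 : 0 < Gamma (1 + s) := Gamma_pos_of_pos (by linarith)
    positivity

open MeasureTheory in
/-- `μ` is a probability measure on `(0, 1]` with moment sequence `g` and logarithmic moment `L`. -/
structure HasMoments (μ : Measure ℝ) (g : ℕ → ℝ) (L : ℝ) : Prop where
  prob : IsProbabilityMeasure μ
  ae_mem : ∀ᵐ x ∂μ, 0 < x ∧ x ≤ 1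
  moment : ∀ k : ℕ, ∫ x, x ^ k ∂μ = g k
  integrable_log : Integrable (fun x => log x) μ
  integral_log : ∫ x, log x ∂μ = L

open MeasureTheory in
lemma HasMoments.integrable_pow {μ : Measure ℝ} {g : ℕ → ℝ} {L : ℝ} (h : HasMoments μ g L)
    (k : ℕ) : Integrable (fun x : ℝ => x ^ k) μ := by
  have := h.prob
  refine Integrable.of_bound (C := 1) (Measurable.aestronglyMeasurable (by fun_prop)) ?_
  filter_upwards [h.ae_mem] with x hx
  rw [Real.norm_eq_abs, abs_of_nonneg (pow_nonneg hx.1.le _)]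
  exact pow_le_one₀ hx.1.le hx.2

lemma Gamma_add_nat_eq_poch {a : ℝ} (ha : 0 < a) (k : ℕ) :
    Gamma (a + k) = poch a k * Gamma a := by
  induction k with
  | zero => simp [poch]
  | succ k ih =>
    rw [poch_succ, Nat.cast_succ, ← add_assoc, Gamma_add_one (by positivity), ih]; ring

open MeasureTheory ProbabilityTheory Filter Topology Set in
/-- The logarithmic moment of a `Beta(a, 1-a)` variable is `ψ(a) - ψ(1)`, the derivative at `s = 0`
of its fractional moments. -/
lemma hasMoments_beta {a d : ℝ} (ha : 0 < a) (ha1 : a < 1) (hd : HasDerivAt Gamma (d * Gamma a) a) :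
    HasMoments (betaMeasure a (1 - a)) (fun k => poch a k / k.factorial)
      (d + eulerMascheroniConstant) := by
  have hG := (Gamma_pos_of_pos ha).ne'
  have hder : HasDerivAt (fun s => Gamma (a + s) / (Gamma a * Gamma (1 + s)))
      (d + eulerMascheroniConstant) 0 := by
    have h1 : HasDerivAt (fun s => Gamma (a + s)) (d * Gamma a) 0 := by
      apply HasDerivAt.comp_const_add a 0
      simpa using hd
    have h2 : HasDerivAt (fun s => Gamma (1 + s)) (-eulerMascheroniConstant) 0 := by
      apply HasDerivAt.comp_const_add 1 0
      simpa using hasDerivAt_Gamma_one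
    have h3 := h1.div (h2.const_mul (Gamma a)) (by simpa using hG)
    convert! h3 using 1
    simp
    field_simp
  have hmain := hasDerivAt_integral_of_dominated_loc_of_deriv_le (μ := betaMeasure a (1 - a))
    (F := fun s x : ℝ => x ^ s) (F' := fun s x : ℝ => x ^ s * log x) (x₀ := 0)
    (s := Ioo (-(a / 4)) (a / 4)) (bound := fun x => (a / 4)⁻¹ * x ^ (-(a / 2)))
    (Ioo_mem_nhds (by linarith) (by linarith))
    (Eventually.of_forall fun s => Measurable.aestronglyMeasurable (by fun_prop))
    (integral_rpow_beta ha ha1 (by linarith)).1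
    (Measurable.aestronglyMeasurable (by fun_prop))
    (by
      filter_upwards [ae_beta a] with x hx s hs
      have hlog : |log x| ≤ (a / 4)⁻¹ * x ^ (-(a / 4)) := by
        rw [abs_of_nonpos (log_nonpos hx.1.le hx.2), ← Real.log_inv, rpow_neg hx.1.le,
          ← inv_rpow hx.1.le]
        have := Real.log_le_rpow_div (inv_nonneg.mpr hx.1.le) (by linarith : 0 < a / 4)
        rwa [div_eq_inv_mul] at this
      rw [norm_mul, Real.norm_eq_abs, Real.norm_eq_abs, abs_of_pos (rpow_pos_of_pos hx.1 _)]
      calc x ^ s * |log x| ≤ x ^ (-(a / 4)) * ((a / 4)⁻¹ * x ^ (-(a / 4))) := by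
            exact mul_le_mul (rpow_le_rpow_of_exponent_ge hx.1 hx.2 hs.1.le) hlog (abs_nonneg _)
              (rpow_nonneg hx.1.le _)
        _ = (a / 4)⁻¹ * x ^ (-(a / 2)) := by
            rw [show -(a / 2) = -(a / 4) + -(a / 4) by ring, rpow_add hx.1]; ring)
    ((integral_rpow_beta ha ha1 (by linarith)).1.const_mul _)
    (by
      filter_upwards [ae_beta a] with x hx s hs
      exact (hasStrictDerivAt_const_rpow hx.1 s).hasDerivAt)
  refine ⟨isProbabilityMeasureBeta ha (sub_pos.mpr ha1), ae_beta a, fun k => ?_, ?_, ?_⟩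
  · have := (integral_rpow_beta ha ha1 (s := k) (by positivity)).2
    simp only [rpow_natCast] at this
    rw [this, Gamma_add_nat_eq_poch ha, add_comm, Gamma_nat_eq_factorial]
    field_simp
  · simpa using hmain.1
  · have h1 := hmain.2
    simp only [rpow_zero, one_mul] at h1
    refine h1.unique (hder.congr_of_eventuallyEq ?_)
    filter_upwards [Ioo_mem_nhds (show -a < 0 by linarith) ha] with s hs
    exact (integral_rpow_beta ha ha1 (by linarith [hs.1])).2

open MeasureTheory in
/-- The product of independent variables multiplies moments and adds logarithmic moments. -/
lemma HasMoments.mul {μ ν : Measure ℝ} {g h : ℕ → ℝ} {L M : ℝ} (hμ : HasMoments μ g L)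
    (hν : HasMoments ν h M) :
    HasMoments ((μ.prod ν).map fun p => p.1 * p.2) (fun k => g k * h k) (L + M) := by
  have := hμ.prob
  have := hν.prob
  have hm : Measurable fun p : ℝ × ℝ => p.1 * p.2 := by fun_prop
  have hae : ∀ᵐ p ∂(μ.prod ν), (0 < p.1 ∧ p.1 ≤ 1) ∧ (0 < p.2 ∧ p.2 ≤ 1) := by
    have h1 := Measure.quasiMeasurePreserving_fst (μ := μ) (ν := ν) |>.ae hμ.ae_mem
    have h2 := Measure.quasiMeasurePreserving_snd (μ := μ) (ν := ν) |>.ae hν.ae_mem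
    filter_upwards [h1, h2] with p a b using ⟨a, b⟩
  have hlog : (fun p : ℝ × ℝ => log (p.1 * p.2)) =ᵐ[μ.prod ν] fun p => log p.1 + log p.2 := by
    filter_upwards [hae] with p hp using log_mul hp.1.1.ne' hp.2.1.ne'
  have hi1 : Integrable (fun p : ℝ × ℝ => log p.1) (μ.prod ν) := hμ.integrable_log.comp_fst ν
  have hi2 : Integrable (fun p : ℝ × ℝ => log p.2) (μ.prod ν) := hν.integrable_log.comp_snd μ
  refine ⟨Measure.isProbabilityMeasure_map hm.aemeasurable, ?_, fun k => ?_, ?_, ?_⟩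
  · rw [ae_map_iff hm.aemeasurable (by measurability)]
    filter_upwards [hae] with p hp
    exact ⟨mul_pos hp.1.1 hp.2.1, mul_le_one₀ hp.1.2 hp.2.1.le hp.2.2⟩
  · rw [integral_map hm.aemeasurable (Measurable.aestronglyMeasurable (by fun_prop))]
    simp only [mul_pow]
    rw [integral_prod_mul (fun x : ℝ => x ^ k) (fun x : ℝ => x ^ k), hμ.moment, hν.moment]
  · rw [integrable_map_measure (Measurable.aestronglyMeasurable (by fun_prop)) hm.aemeasurable]
    exact (hi1.add hi2).congr hlog.symm
  · rw [integral_map hm.aemeasurable (Measurable.aestronglyMeasurable (by fun_prop)),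
      integral_congr_ae hlog, integral_add hi1 hi2, integral_fun_fst (fun x => log x),
      integral_fun_snd (fun x => log x), hμ.integral_log, hν.integral_log]
    simp

/-! ### A measure with moments `gcoef` -/

open Set in
/-- Gauss's multiplication formula for three factors, by the Bohr–Mollerup theorem. -/
lemma Gamma_triple {s : ℝ} (hs : 0 < s) :
    3 ^ s * (Gamma (s / 3) * Gamma (s / 3 + 1 / 3) * Gamma (s / 3 + 2 / 3)) /
      (3 * (Gamma (1 / 3) * Gamma (2 / 3))) = Gamma s := by
  have hC : 0 < 3 * (Gamma (1 / 3) * Gamma (2 / 3)) := by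
    have := Gamma_pos_of_pos (show (0 : ℝ) < 1 / 3 by norm_num)
    have := Gamma_pos_of_pos (show (0 : ℝ) < 2 / 3 by norm_num)
    positivity
  set C := 3 * (Gamma (1 / 3) * Gamma (2 / 3)) with hCdef
  have hconv : ∀ c : ℝ, 0 ≤ c → ConvexOn ℝ (Ioi (0 : ℝ)) (fun s => log (Gamma (s / 3 + c))) := by
    intro c hc
    refine ⟨convex_Ioi 0, fun x hx y hy a b ha hb hab => ?_⟩
    have hx' : x / 3 + c ∈ Ioi (0 : ℝ) := by have : 0 < x := hx; simp only [Set.mem_Ioi]; positivity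
    have hy' : y / 3 + c ∈ Ioi (0 : ℝ) := by have : 0 < y := hy; simp only [Set.mem_Ioi]; positivity
    have := convexOn_log_Gamma.2 hx' hy' ha hb hab
    simp only [smul_eq_mul, Function.comp_apply] at this ⊢
    convert this using 3
    linear_combination (-c) * hab
  refine eq_Gamma_of_log_convex (f := fun s => 3 ^ s * (Gamma (s / 3) * Gamma (s / 3 + 1 / 3) *
    Gamma (s / 3 + 2 / 3)) / C) ?_ ?_ ?_ ?_ hs
  · have hlin : ConvexOn ℝ (Ioi (0 : ℝ)) fun s : ℝ => log 3 * s :=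
      ((convexOn_id (convex_Ioi (0 : ℝ))).smul (log_pos (by norm_num : (1 : ℝ) < 3)).le)
    refine (((hlin.add (((hconv 0 le_rfl).add (hconv (1 / 3) (by norm_num))).add
      (hconv (2 / 3) (by norm_num)))).add_const (-log C))).congr ?_
    intro s hs
    have hs : 0 < s := hs
    have h1 : Gamma (s / 3) ≠ 0 := (Gamma_pos_of_pos (by positivity)).ne'
    have h2 : Gamma (s / 3 + 1 / 3) ≠ 0 := (Gamma_pos_of_pos (by positivity)).ne'
    have h3 : Gamma (s / 3 + 2 / 3) ≠ 0 := (Gamma_pos_of_pos (by positivity)).ne'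
    have h4 : (3 : ℝ) ^ s ≠ 0 := by positivity
    simp only [Function.comp_apply, Pi.add_apply, add_zero]
    rw [log_div (by positivity) hC.ne', log_mul h4 (by positivity), log_mul (by positivity) h3,
      log_mul h1 h2, log_rpow (by norm_num)]
    ring
  · intro y hy
    rw [rpow_add_one (by norm_num), show (y + 1) / 3 = y / 3 + 1 / 3 by ring,
      show y / 3 + 1 / 3 + 1 / 3 = y / 3 + 2 / 3 by ring,
      show y / 3 + 1 / 3 + 2 / 3 = y / 3 + 1 by ring, Gamma_add_one (by positivity)]
    ring
  · intro y hy
    have h1 : 0 < Gamma (y / 3) := (Gamma_pos_of_pos (by positivity))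
    have h2 : 0 < Gamma (y / 3 + 1 / 3) := (Gamma_pos_of_pos (by positivity))
    have h3 : 0 < Gamma (y / 3 + 2 / 3) := (Gamma_pos_of_pos (by positivity))
    positivity
  · rw [rpow_one, show (1 / 3 : ℝ) + 1 / 3 = 2 / 3 by norm_num,
      show (1 / 3 : ℝ) + 2 / 3 = 1 by norm_num, Gamma_one, mul_one, ← hCdef, div_self hC.ne']

open Filter Topology Set in
/-- `ψ(1/3) + ψ(2/3) = -2γ - 3 log 3`. -/
lemma digamma_thirds : ∃ d₁ d₂ : ℝ, HasDerivAt Gamma (d₁ * Gamma (1 / 3)) (1 / 3) ∧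
    HasDerivAt Gamma (d₂ * Gamma (2 / 3)) (2 / 3) ∧
    d₁ + d₂ = -2 * eulerMascheroniConstant - 3 * log 3 := by
  have p1 := Gamma_pos_of_pos (show (0 : ℝ) < 1 / 3 by norm_num)
  have p2 := Gamma_pos_of_pos (show (0 : ℝ) < 2 / 3 by norm_num)
  have hdiff : ∀ s : ℝ, 0 < s → HasDerivAt Gamma (deriv Gamma s / Gamma s * Gamma s) s := by
    intro s hs
    rw [div_mul_cancel₀ _ (Gamma_pos_of_pos hs).ne']
    refine (differentiableAt_Gamma fun m => ?_).hasDerivAt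
    have : (0 : ℝ) ≤ m := by positivity
    linarith
  refine ⟨_, _, hdiff _ (by norm_num), hdiff _ (by norm_num), ?_⟩
  have h1 := hdiff (1 / 3) (by norm_num)
  have h2 := hdiff (2 / 3) (by norm_num)
  set d₁ := deriv Gamma (1 / 3) / Gamma (1 / 3)
  set d₂ := deriv Gamma (2 / 3) / Gamma (2 / 3)
  have hlin : ∀ c : ℝ, HasDerivAt (fun s : ℝ => s / 3 + c) (1 / 3) 1 := fun c =>
    ((hasDerivAt_id (1 : ℝ)).div_const 3).add_const c
  have k1 : HasDerivAt (fun s : ℝ => Gamma (s / 3 + 0)) (d₁ * Gamma (1 / 3) * (1 / 3)) 1 :=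
    HasDerivAt.comp (h₂ := Gamma) 1 (by simpa using h1) (hlin 0)
  have k2 : HasDerivAt (fun s : ℝ => Gamma (s / 3 + 1 / 3)) (d₂ * Gamma (2 / 3) * (1 / 3)) 1 :=
    HasDerivAt.comp (h₂ := Gamma) 1
      (by rw [show (1 / 3 : ℝ) + 1 / 3 = 2 / 3 by norm_num]; exact h2) (hlin _)
  have k3 : HasDerivAt (fun s : ℝ => Gamma (s / 3 + 2 / 3))
      (-eulerMascheroniConstant * (1 / 3)) 1 :=
    HasDerivAt.comp (h₂ := Gamma) 1
      (by rw [show (1 / 3 : ℝ) + 2 / 3 = 1 by norm_num]; exact hasDerivAt_Gamma_one) (hlin _)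
  have k0 : HasDerivAt (fun s : ℝ => (3 : ℝ) ^ s) ((3 : ℝ) ^ (1 : ℝ) * log 3) 1 :=
    (hasStrictDerivAt_const_rpow (by norm_num) 1).hasDerivAt
  have hT := (k0.mul ((k1.mul k2).mul k3)).div_const (3 * (Gamma (1 / 3) * Gamma (2 / 3)))
  have heq : Gamma =ᶠ[𝓝 1] fun s : ℝ => 3 ^ s * (Gamma (s / 3 + 0) * Gamma (s / 3 + 1 / 3) *
      Gamma (s / 3 + 2 / 3)) / (3 * (Gamma (1 / 3) * Gamma (2 / 3))) := by
    filter_upwards [lt_mem_nhds (show (0 : ℝ) < 1 by norm_num)] with s hs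
    rw [add_zero]
    exact (Gamma_triple hs).symm
  have hfin := hasDerivAt_Gamma_one.unique (HasDerivAt.congr_of_eventuallyEq hT heq)
  simp only [Pi.mul_apply] at hfin
  rw [show (1 / 3 : ℝ) + 1 / 3 = 2 / 3 by norm_num, show (1 / 3 : ℝ) + 2 / 3 = 1 by norm_num,
    Gamma_one, add_zero, rpow_one] at hfin
  field_simp at hfin
  linarith

open MeasureTheory ProbabilityTheory in
/-- The moment problem for `gcoef` is solved by a product of three independent beta variables. -/
lemma exists_hasMoments_gcoef : ∃ μ : Measure ℝ, HasMoments μ gcoef (-log 108) := by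
  obtain ⟨d₁, d₂, h1, h2, hd⟩ := digamma_thirds
  have hhalf : HasDerivAt Gamma ((-(eulerMascheroniConstant + 2 * log 2)) * Gamma (1 / 2)) (1 / 2) := by
    rw [Gamma_one_half_eq]
    convert! hasDerivAt_Gamma_one_half using 1
    ring
  have m := ((hasMoments_beta (by norm_num) (by norm_num) h1).mul
    (hasMoments_beta (by norm_num) (by norm_num) hhalf)).mul
    (hasMoments_beta (by norm_num) (by norm_num) h2)
  have hg : (fun k => poch (1 / 3) k / k.factorial * (poch (1 / 2) k / k.factorial) *
      (poch (2 / 3) k / k.factorial)) = gcoef := by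
    ext k
    simp only [gcoef]
    field_simp
  have hL : d₁ + eulerMascheroniConstant + (-(eulerMascheroniConstant + 2 * log 2) +
      eulerMascheroniConstant) + (d₂ + eulerMascheroniConstant) = -log 108 := by
    rw [show (108 : ℝ) = 2 ^ 2 * 3 ^ 3 by norm_num, log_mul (by norm_num) (by norm_num), log_pow,
      log_pow]
    push_cast
    linarith
  rw [hL] at m
  exact ⟨_, hg ▸ m⟩

/-! ### The second transformation at the boundary point -/

section Continuation

open MeasureTheory Filter Topology

variable {μ : Measure ℝ} {g : ℕ → ℝ} {L : ℝ}

lemma HasMoments.integrable_log_one_add (h : HasMoments μ g L) {T : ℝ} (hT : -1 < T) :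
    Integrable (fun x => log (1 + T * x)) μ := by
  have := h.prob
  refine Integrable.of_bound (C := |log (1 + T)| + |T|)
    (Measurable.aestronglyMeasurable (by fun_prop)) ?_
  filter_upwards [h.ae_mem] with x ⟨hx0, hx1⟩
  rw [Real.norm_eq_abs]
  rcases le_or_gt 0 T with hT0 | hT0
  · have h0 : 0 ≤ T * x := by positivity
    rw [abs_of_nonneg (log_nonneg (by linarith)), abs_of_nonneg hT0]
    have := log_le_sub_one_of_pos (show 0 < 1 + T * x by linarith)
    have := abs_nonneg (log (1 + T))
    nlinarith
  · have h1 : 1 + T ≤ 1 + T * x := by nlinarith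
    have h2 : 1 + T * x ≤ 1 := by nlinarith
    rw [abs_of_nonpos (log_nonpos (by linarith) h2), abs_of_nonpos (log_nonpos (by linarith)
      (by linarith))]
    have := log_le_log (by linarith) h1
    have := abs_nonneg T
    linarith

/-- Taylor expansion of `T ↦ ∫ log (1 + T x) dμ` about a point `T₀ ≥ 0`, by termwise integration of
the logarithmic series. -/
lemma HasMoments.hasSum_integral_log (h : HasMoments μ g L) {T z : ℝ} (hT : 0 ≤ T) (hz : |z| < 1) :
    HasSum (fun j : ℕ => z ^ (j + 1) *
        ((-1) ^ j / (j + 1) * ∫ x, (x / (1 + T * x)) ^ (j + 1) ∂μ))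
      (∫ x, log (1 + (T + z) * x) ∂μ - ∫ x, log (1 + T * x) ∂μ) := by
  have := h.prob
  have hy : ∀ᵐ x ∂μ, 0 ≤ x / (1 + T * x) ∧ x / (1 + T * x) ≤ 1 := by
    filter_upwards [h.ae_mem] with x ⟨hx0, hx1⟩
    have : 0 ≤ T * x := by positivity
    exact ⟨by positivity, (div_le_one (by linarith)).mpr (by linarith)⟩
  set F : ℕ → ℝ → ℝ := fun j x => z ^ (j + 1) * ((-1) ^ j / (j + 1) * (x / (1 + T * x)) ^ (j + 1))
  have hb : ∀ j, ∀ᵐ x ∂μ, ‖F j x‖ ≤ |z| ^ (j + 1) := by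
    intro j
    filter_upwards [hy] with x ⟨h0, h1⟩
    simp only [F, norm_mul, norm_div, norm_pow, norm_neg, norm_one, one_pow, Real.norm_eq_abs]
    rw [← abs_div x, abs_of_nonneg h0, abs_of_nonneg (by positivity : (0 : ℝ) ≤ j + 1)]
    refine mul_le_of_le_one_right (by positivity) (mul_le_one₀ ?_ (by positivity)
      (pow_le_one₀ h0 h1))
    rw [div_le_one (by positivity)]
    linarith [(Nat.cast_nonneg j : (0 : ℝ) ≤ j)]
  have hInt : ∀ j, Integrable (F j) μ := fun j =>
    Integrable.of_bound (Measurable.aestronglyMeasurable (by simp only [F]; fun_prop)) _ (hb j)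
  have hsum : Summable fun j => ∫ x, ‖F j x‖ ∂μ := by
    refine Summable.of_nonneg_of_le (fun j => integral_nonneg fun x => norm_nonneg _) (fun j => ?_)
      ((summable_nat_add_iff 1).mpr (summable_geometric_of_lt_one (abs_nonneg z) hz))
    calc ∫ x, ‖F j x‖ ∂μ ≤ ∫ _, |z| ^ (j + 1) ∂μ :=
          integral_mono_ae (hInt j).norm (integrable_const _) (hb j)
      _ = _ := by simp
  have key := hasSum_integral_of_summable_integral_norm hInt hsum
  have hval : ∫ x, ∑' j, F j x ∂μ =
      ∫ x, log (1 + (T + z) * x) ∂μ - ∫ x, log (1 + T * x) ∂μ := by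
    rw [← integral_sub (h.integrable_log_one_add (by linarith [(abs_lt.mp hz).1]))
      (h.integrable_log_one_add (by linarith))]
    refine integral_congr_ae ?_
    filter_upwards [hy, h.ae_mem] with x ⟨h0, h1⟩ ⟨hx0, hx1⟩
    have hp : 0 < 1 + T * x := by positivity
    have habs : |(-z) * (x / (1 + T * x))| < 1 := by
      rw [abs_mul, abs_neg, abs_of_nonneg h0]
      exact (mul_le_of_le_one_right (abs_nonneg z) h1).trans_lt hz
    have hs := (Real.hasSum_pow_div_log_of_abs_lt_one habs).neg
    rw [neg_neg] at hs
    have hF : (fun j => F j x) = fun j : ℕ => -((-z * (x / (1 + T * x))) ^ (j + 1) / (j + 1)) := by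
      ext j
      simp only [F]
      rw [mul_pow, neg_pow z, pow_succ (-1 : ℝ)]
      ring
    rw [hF, hs.tsum_eq, ← log_div _ hp.ne']
    · congr 1
      field_simp
      ring
    · have := (abs_lt.mp hz).1
      nlinarith [mul_nonneg hT hx0.le]
  rw [hval] at key
  convert! key using 2 with j
  simp only [F, integral_const_mul]

lemma HasMoments.analyticAt_integral_log (h : HasMoments μ g L) {T : ℝ} (hT : 0 ≤ T) :
    AnalyticAt ℝ (fun T => ∫ x, log (1 + T * x) ∂μ) T := by
  refine ⟨FormalMultilinearSeries.ofScalars ℝ fun n : ℕ => Nat.casesOn n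
    (∫ x, log (1 + T * x) ∂μ) fun j => (-1) ^ j / (j + 1) * ∫ x, (x / (1 + T * x)) ^ (j + 1) ∂μ, ?_⟩
  rw [hasFPowerSeriesAt_iff]
  filter_upwards [Metric.ball_mem_nhds (0 : ℝ) one_pos] with z hz
  rw [Metric.mem_ball, dist_zero_right, Real.norm_eq_abs] at hz
  rw [← hasSum_nat_add_iff' 1]
  simpa [FormalMultilinearSeries.coeff_ofScalars] using h.hasSum_integral_log hT hz

/-- The coefficients `(aₙ₊₁ + 2aₙ)/(n + 1)` of the second transformation, as a power series without
constant term. -/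
noncomputable def bcoef : ℕ → ℝ
  | 0 => 0
  | n + 1 => (adomb (n + 1) + 2 * adomb n) / (n + 1)

lemma bcoef_nonneg (n : ℕ) : 0 ≤ bcoef n := by
  cases n with
  | zero => exact le_rfl
  | succ n =>
    have := adomb_nonneg n
    have := adomb_nonneg (n + 1)
    simp only [bcoef]
    positivity

lemma summable_bcoef : Summable bcoef := by
  rw [← summable_nat_add_iff 1]
  refine Summable.of_nonneg_of_le (fun n => bcoef_nonneg _) (fun n => ?_)
    (hasSum_two_term₁.summable.mul_left 8)
  have := adomb_nonneg n
  have := adomb_nonneg (n + 1)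
  simp only [bcoef]
  rw [← mul_div_assoc]
  gcongr
  linarith

/-- For small `w` the power series is summed by the cubic substitution `T = (27/4) w / (1 - w)³`. -/
lemma tsum_bcoef_small (h : HasMoments μ gcoef L) {w : ℝ} (hw0 : 0 ≤ w) (hw1 : w < 1 / 20) :
    ∑' n, bcoef n * w ^ n =
      -3 * log (1 - w) - ∫ x, log (1 + 27 / 4 * (w / (1 - w) ^ 3) * x) ∂μ := by
  have := h.prob
  have hpos : (0 : ℝ) < 1 - w := by linarith
  set T := 27 / 4 * (w / (1 - w) ^ 3) with hTdef
  have hT0 : 0 ≤ T := by positivity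
  have hT1 : |T| < 1 := by
    have h1 : (19 / 20 : ℝ) ^ 3 ≤ (1 - w) ^ 3 := by gcongr; linarith
    rw [abs_of_nonneg hT0, hTdef, ← mul_div_assoc, div_lt_one (by positivity)]
    norm_num at h1
    linarith
  have hterm : ∀ k : ℕ, ecoef k * (w ^ 1 / (1 - w) ^ 3) ^ (k + 1) =
      gcoef (k + 1) / (k + 1) * T ^ (k + 1) := by
    intro k
    rw [ecoef, hTdef, mul_pow, pow_one]
    ring
  have hepos : ∀ k, 0 ≤ ecoef k := fun k => by
    have := gcoef_pos (k + 1); unfold ecoef; positivity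
  have hlogT := h.hasSum_integral_log le_rfl hT1
  simp only [zero_mul, add_zero, div_one, zero_add, log_one, integral_zero, sub_zero,
    h.moment] at hlogT
  have hcub := hasSum_cubic (p := 1) (r := 1) rfl le_rfl hw0 (by linarith)
    (fun k => (-1) ^ (k + 1) * ecoef k) (by
      simp only [abs_mul, abs_pow, abs_neg, abs_one, one_pow, one_mul, abs_of_nonneg (hepos _),
        hterm]
      convert! hlogT.summable.abs using 2 with k
      have := gcoef_pos (k + 1)
      rw [abs_mul, abs_mul, abs_div, abs_pow, abs_pow, abs_neg, abs_one, abs_of_nonneg hT0,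
        abs_of_pos this, abs_of_pos (by positivity : (0 : ℝ) < k + 1)]
      ring)
  have hcubval : ∑' k : ℕ, (-1) ^ (k + 1) * ecoef k * (w ^ 1 / (1 - w) ^ 3) ^ (k + 1) =
      -∫ x, log (1 + T * x) ∂μ := by
    rw [← hlogT.neg.tsum_eq]
    refine tsum_congr fun k => ?_
    rw [mul_assoc, hterm]
    ring
  rw [hcubval, ← hasSum_nat_add_iff' 1] at hcub
  have hlog := (Real.hasSum_pow_div_log_of_abs_lt_one (x := w)
    (by rw [abs_of_nonneg hw0]; linarith)).mul_left 3
  have hb : HasSum (fun n => bcoef (n + 1) * w ^ (n + 1))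
      (-3 * log (1 - w) - ∫ x, log (1 + T * x) ∂μ) := by
    convert! hlog.add hcub using 1
    · ext n
      simp only [bcoef, adomb_two_term₂]
      ring
    · simp
      ring
  have hb' := (hasSum_nat_add_iff (f := fun n => bcoef n * w ^ n) 1).mp hb
  rw [hb'.tsum_eq]
  simp [bcoef]

/-- Both sides are real-analytic on `[0, 1)`, so their equality near `0` propagates. -/
lemma tsum_bcoef (h : HasMoments μ gcoef L) {w : ℝ} (hw0 : 0 ≤ w) (hw1 : w < 1) :
    ∑' n, bcoef n * w ^ n =
      -3 * log (1 - w) - ∫ x, log (1 + 27 / 4 * (w / (1 - w) ^ 3) * x) ∂μ := by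
  have hA : AnalyticOnNhd ℝ (fun w => ∑' n, bcoef n * w ^ n) (Set.Ico 0 1) := by
    set p := FormalMultilinearSeries.ofScalars ℝ bcoef with hp
    have hr : (1 : ENNReal) ≤ p.radius := by
      have := p.le_radius_of_bound (∑' n, bcoef n) (r := 1) fun n => by
        rw [hp, FormalMultilinearSeries.ofScalars_norm, Real.norm_eq_abs,
          abs_of_nonneg (bcoef_nonneg n)]
        simpa using summable_bcoef.le_tsum n fun j _ => bcoef_nonneg j
      simpa using this
    have hball := p.hasFPowerSeriesOnBall (one_pos.trans_le hr)
    intro w hw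
    have hwm : w ∈ Metric.eball (0 : ℝ) p.radius := by
      refine Metric.eball_subset_eball hr ?_
      rw [Metric.mem_eball, edist_dist, dist_zero_right, Real.norm_eq_abs, abs_of_nonneg hw.1]
      exact ENNReal.ofReal_lt_one.mpr hw.2
    convert! hball.analyticAt_of_mem hwm using 1
    ext x
    exact (FormalMultilinearSeries.ofScalars_sum_eq bcoef x).symm
  have hB : AnalyticOnNhd ℝ (fun w => -3 * log (1 - w) -
      ∫ x, log (1 + 27 / 4 * (w / (1 - w) ^ 3) * x) ∂μ) (Set.Ico 0 1) := by
    intro w hw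
    have hpos : 0 < 1 - w := by linarith [hw.2]
    have h1 : AnalyticAt ℝ (fun w : ℝ => 1 - w) w := analyticAt_const.sub analyticAt_id
    have h2 : AnalyticAt ℝ (fun w : ℝ => 27 / 4 * (w / (1 - w) ^ 3)) w :=
      analyticAt_const.mul (analyticAt_id.div (h1.pow 3) (by positivity))
    have h3 : AnalyticAt ℝ (fun T => ∫ x, log (1 + T * x) ∂μ) (27 / 4 * (w / (1 - w) ^ 3)) :=
      h.analyticAt_integral_log (by have := hw.1; positivity)
    exact (analyticAt_const.mul (h1.log hpos)).sub
      (AnalyticAt.fun_comp (f := fun w : ℝ => 27 / 4 * (w / (1 - w) ^ 3)) h3 h2)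
  refine hA.eqOn_of_preconnected_of_frequently_eq hB (isPreconnected_Ico) (z₀ := 0) (by simp) ?_
    ⟨hw0, hw1⟩
  have hev : ∀ᶠ z in 𝓝[>] (0 : ℝ), ∑' n, bcoef n * z ^ n =
      -3 * log (1 - z) - ∫ x, log (1 + 27 / 4 * (z / (1 - z) ^ 3) * x) ∂μ := by
    filter_upwards [Ioo_mem_nhdsGT (show (0 : ℝ) < 1 / 20 by norm_num)] with z hz
    exact tsum_bcoef_small h hz.1.le hz.2
  exact hev.frequently.filter_mono (nhdsWithin_mono _ fun z hz => ne_of_gt hz)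

/-- As `w → 1⁻` the right-hand side tends to `-∫ log (27x/4) dμ`, and Abel's theorem applies. -/
lemma tsum_bcoef_one (h : HasMoments μ gcoef (-log 108)) : ∑' n, bcoef n = log 16 := by
  have := h.prob
  have hAbel := Real.tendsto_tsum_powerSeries_nhdsWithin_lt summable_bcoef.hasSum.tendsto_sum_nat
  refine tendsto_nhds_unique hAbel ?_
  have hev : ∀ᶠ w in 𝓝[<] (1 : ℝ), w ∈ Set.Ioo (1 / 2 : ℝ) 1 :=
    Ioo_mem_nhdsLT (by norm_num)
  have hInt : ∀ c : ℝ, Integrable (fun x => c + log x) μ := fun c =>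
    (integrable_const c).add h.integrable_log
  have hlim : Tendsto (fun w : ℝ => ∫ x, log ((1 - w) ^ 3 + 27 / 4 * w * x) ∂μ) (𝓝[<] 1)
      (𝓝 (∫ x, (log (27 / 4) + log x) ∂μ)) := by
    refine tendsto_integral_filter_of_dominated_convergence
      (fun x => 8 + |log x|) (Eventually.of_forall fun w =>
        Measurable.aestronglyMeasurable (by fun_prop)) ?_
      ((integrable_const _).add h.integrable_log.abs) ?_
    · filter_upwards [hev] with w hw
      filter_upwards [h.ae_mem] with x ⟨hx0, hx1⟩
      have hw1 : 0 < 1 - w := by linarith [hw.2]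
      have hw2 : (1 - w) ^ 3 ≤ 1 := pow_le_one₀ hw1.le (by linarith [hw.1])
      have hw3 : 0 < (1 - w) ^ 3 := by positivity
      have hlow : x ≤ (1 - w) ^ 3 + 27 / 4 * w * x := by nlinarith [hw.1]
      have hwx : w * x ≤ 1 := by nlinarith [hw.1, hw.2]
      have hup : (1 - w) ^ 3 + 27 / 4 * w * x ≤ 8 := by nlinarith
      have l1 := log_le_log hx0 hlow
      have l2 := log_le_sub_one_of_pos (hx0.trans_le hlow)
      rw [Real.norm_eq_abs, abs_le]
      constructor <;> [have := neg_abs_le (log x); have := abs_nonneg (log x)] <;> linarith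
    · filter_upwards [h.ae_mem] with x ⟨hx0, hx1⟩
      rw [← log_mul (by norm_num) hx0.ne']
      have hc : ContinuousAt (fun w : ℝ => log ((1 - w) ^ 3 + 27 / 4 * w * x)) 1 := by
        refine ContinuousAt.log (by fun_prop) ?_
        norm_num
        exact hx0.ne'
      have := hc.tendsto.mono_left (nhdsWithin_le_nhds (s := Set.Iio 1))
      simpa using this
  have hval : -∫ x, (log (27 / 4) + log x) ∂μ = log 16 := by
    rw [integral_add (integrable_const _) h.integrable_log, h.integral_log]
    simp only [integral_const, probReal_univ, one_smul]
    rw [show (108 : ℝ) = 27 / 4 * 16 by norm_num, log_mul (by norm_num) (by norm_num)]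
    ring
  rw [← hval]
  refine hlim.neg.congr' ?_
  filter_upwards [hev] with w hw
  have hw1 : 0 < 1 - w := by linarith [hw.2]
  have hw0 : 0 < w := by linarith [hw.1]
  rw [tsum_bcoef h hw0.le hw.2]
  have hsplit : ∫ x, log ((1 - w) ^ 3 + 27 / 4 * w * x) ∂μ =
      ∫ x, (3 * log (1 - w) + log (1 + 27 / 4 * (w / (1 - w) ^ 3) * x)) ∂μ := by
    refine integral_congr_ae ?_
    filter_upwards [h.ae_mem] with x ⟨hx0, hx1⟩
    have e : (1 - w) ^ 3 + 27 / 4 * w * x =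
        (1 - w) ^ 3 * (1 + 27 / 4 * (w / (1 - w) ^ 3) * x) := by
      field_simp
    rw [e, log_mul (by positivity) (by positivity), log_pow]
    norm_num
  have hTpos : 0 ≤ 27 / 4 * (w / (1 - w) ^ 3) := by positivity
  rw [hsplit, integral_add (integrable_const _) (h.integrable_log_one_add (by linarith))]
  simp only [integral_const, probReal_univ, one_smul]
  ring

end Continuation

/-- The second transformation at `w = 1`. -/
lemma hasSum_two_term₂ :
    HasSum (fun n : ℕ => (adomb (n + 1) + 2 * adomb n) / ((n : ℝ) + 1)) (log 16) := by
  obtain ⟨μ, h⟩ := exists_hasMoments_gcoef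
  have hb := summable_bcoef.hasSum
  rw [tsum_bcoef_one h, ← hasSum_nat_add_iff' 1] at hb
  simpa [bcoef] using hb

/-! ### The spanning tree constant -/

lemma poch_succ_left (a : ℝ) (n : ℕ) : poch a (n + 1) = a * poch (a + 1) n := by
  rw [poch, poch, prod_range_succ', mul_comm]
  congr 1
  · simp
  · refine prod_congr rfl fun i _ => ?_
    push_cast
    ring

lemma poch_one (n : ℕ) : poch 1 n = n.factorial := by
  induction n with
  | zero => simp [poch]
  | succ n ih =>
    rw [poch_succ, ih, Nat.factorial_succ]
    push_cast
    ring

lemma poch_two (n : ℕ) : poch 2 n = (n + 1).factorial := by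
  rw [← poch_one, poch_succ_left, one_mul]
  norm_num

lemma tsum_gcoef_div : ∑' k : ℕ, gcoef (k + 1) / ((k : ℝ) + 1) = 1 / 9 * F54 1 := by
  rw [F54, ← tsum_mul_left]
  refine tsum_congr fun k => ?_
  rw [gcoef, poch_succ_left, poch_succ_left, poch_succ_left, poch_one, poch_two,
    show (1 / 3 : ℝ) + 1 = 4 / 3 by norm_num, show (1 / 2 : ℝ) + 1 = 3 / 2 by norm_num,
    show (2 / 3 : ℝ) + 1 = 5 / 3 by norm_num, Nat.factorial_succ]
  push_cast
  field_simp
  ring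

lemma tsum_adomb : ∑' n : ℕ, adomb (n + 1) / ((n : ℝ) + 1) =
    8 / 15 * (-3 * log (3 / 4) + 1 / 9 * F54 1) - 1 / 15 * log 16 := by
  have h := (hasSum_two_term₁.mul_left (8 / 15)).sub (hasSum_two_term₂.mul_left (1 / 15))
  rw [tsum_gcoef_div] at h
  rw [← h.tsum_eq]
  refine tsum_congr fun n => ?_
  ring

/-- The diamond lattice spanning tree constant in hypergeometric form. -/
theorem diamond_spanning_tree_constant :
    Real.log 4 - (1/2) *
      ∑' n : ℕ, (1/16 : ℝ) ^ (n + 1) * (1 / ((n : ℝ) + 1)) *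
        ∑ j ∈ Finset.range (n + 2),
          (((n + 1).choose j : ℝ)) ^ 2 * ((2 * j).choose j : ℝ) *
            ((2 * (n + 1) - 2 * j).choose (n + 1 - j) : ℝ) =
    (8/15) * Real.log 2 + (4/5) * Real.log 3 - (4/135) * F54 1 := by
  have hterm : ∀ n : ℕ, (1/16 : ℝ) ^ (n + 1) * (1 / ((n : ℝ) + 1)) *
      ∑ j ∈ Finset.range (n + 2), (((n + 1).choose j : ℝ)) ^ 2 * ((2 * j).choose j : ℝ) *
        ((2 * (n + 1) - 2 * j).choose (n + 1 - j) : ℝ) = adomb (n + 1) / ((n : ℝ) + 1) := by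
    intro n
    rw [adomb, Finset.sum_congr rfl fun j hj =>
      (f₀_eq (Nat.lt_succ_iff.mp (Finset.mem_range.mp hj))).symm]
    ring
  rw [tsum_congr hterm, tsum_adomb, log_div (by norm_num) (by norm_num),
    show (4 : ℝ) = 2 ^ 2 by norm_num, show (16 : ℝ) = 2 ^ 4 by norm_num, log_pow, log_pow]
  push_cast
  ring
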